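/- arXiv:1702.03789 — 2 statements merged into one kernel-verified Lean document; each statement's English description precedes it below -/
import Mathlib

section
/- Let G be a finitely generated group, given as a Cayley graph with respect to a finite symmetric generating set, that has exponentially many fat bigons. Then G is not isomorphic to any subgroup of a hyperbolic group, i.e. of a finitely generated group one (equivalently, any) of whose Cayley graphs is δ-hyperbolic for some δ ≥ 1. -/
/-!
Let `φ : G → H` be an injective homomorphism to a hyperbolic group. It is Lipschitz, and since it
is injective and balls in `H` are finite, elements with nearby images are nearby
(`exists_lipschitz`, `exists_proper`). Balls in `H` grow at most exponentially, so for `q` large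
enough, fewer than `c ^ n` elements of `G` are mapped to the ball of radius `n / q` in `H`. Hence,
for infinitely many `n`, some bigon based at `1` and `x` with `d(1, x) ≤ n` has
`d(1, φ x) > n / q`. The images of its two sides are paths of length linear in the distance `m`
between their endpoints, with a factor independent of `n` and `s`.

In a hyperbolic graph such a path passes within a bounded distance of most points of a geodesic
between its endpoints. To see this, sample the path at points with gaps of size `R`. Across
a gap that starts further than `2R` from the geodesic, the nearest-point projection to the geodesic
advances by at most a constant that depends only on `δ` (`projection_contracting`), so gaps of this
kind cover at most `O(m / R)` points of the geodesic, while points covered by the other gaps are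
within `8R` of the path (`exists_exceptional_finset`). For `R` large, the two sides of the bigon
therefore come near a common point of the geodesic, far away from its endpoints
(`exists_close_vertices`). The scale `R` depends neither on `s` nor on `C`, so choosing `s` large
with respect to `R` contradicts the separation of the two sides of the bigon.
-/

open SimpleGraph

/-- A graph has uniformly bounded degree if there is a uniform finite bound on
the cardinality of all neighbour sets. -/
def BddDegree {V : Type*} (G : SimpleGraph V) : Prop :=
  ∃ D : ℕ, ∀ v : V, (G.neighborSet v).encard ≤ D

/-- A walk is geodesic if its length realizes the graph distance between its endpoints. -/
def SimpleGraph.Walk.IsGeodesic {V : Type*} {G : SimpleGraph V} {x y : V}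
    (w : G.Walk x y) : Prop :=
  w.length = G.dist x y

/-- A graph is `δ`-hyperbolic if each side of every geodesic triangle is contained in the
closed `δ`-neighbourhood of the union of the other two sides. -/
def GraphHyperbolic {V : Type*} (G : SimpleGraph V) (δ : ℝ) : Prop :=
  ∀ ⦃a b c : V⦄ (γ₁ : G.Walk a b) (γ₂ : G.Walk b c) (γ₃ : G.Walk c a),
    γ₁.IsGeodesic → γ₂.IsGeodesic → γ₃.IsGeodesic →
      ∀ u ∈ γ₁.support, ∃ v, (v ∈ γ₂.support ∨ v ∈ γ₃.support) ∧ (G.dist u v : ℝ) ≤ δ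

/-- `x` admits an `(L,s,C)`-bigon with respect to the basepoint `x₀`: two paths from `x₀`
to `x`, each of length at most `L·d(x₀,x)`, such that any vertex of the first path outside
the `C`-neighbourhood of `{x₀, x}` is at distance more than `s` from any vertex of the
second path outside that neighbourhood. -/
def IsBigonAt {V : Type*} (G : SimpleGraph V) (x₀ : V) (L s C : ℝ) (x : V) : Prop :=
  ∃ α₁ α₂ : G.Walk x₀ x,
    ((α₁.length : ℝ) ≤ L * G.dist x₀ x) ∧ ((α₂.length : ℝ) ≤ L * G.dist x₀ x) ∧
    ∀ u ∈ α₁.support, ∀ v ∈ α₂.support,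
      (C < (G.dist x₀ u : ℝ) ∧ C < (G.dist x u : ℝ)) →
      (C < (G.dist x₀ v : ℝ) ∧ C < (G.dist x v : ℝ)) →
      s < (G.dist u v : ℝ)

/-- The set `B^X(L,s,C)` of vertices admitting an `(L,s,C)`-bigon. -/
def bigonSet {V : Type*} (G : SimpleGraph V) (x₀ : V) (L s C : ℝ) : Set V :=
  {x | IsBigonAt G x₀ L s C x}

/-- The closed ball of radius `n` about `x` in the graph metric. -/
def gBall {V : Type*} (G : SimpleGraph V) (x : V) (n : ℕ) : Set V :=
  {v | G.dist x v ≤ n}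

/-- `X` has exponentially many fat bigons at `x₀`. -/
def HasExpManyFatBigons {V : Type*} (G : SimpleGraph V) (x₀ : V) : Prop :=
  ∃ s₀ c L : ℝ, 0 ≤ s₀ ∧ 1 < c ∧ 1 < L ∧
    ∀ s : ℝ, s₀ ≤ s → ∃ C : ℝ, 0 ≤ C ∧
      {n : ℕ | (c ^ n : ℝ) ≤ ((bigonSet G x₀ L s C ∩ gBall G x₀ n).ncard : ℝ)}.Infinite

/-- `X` has no fat bigons at `x₀`. -/
def HasNoFatBigons {V : Type*} (G : SimpleGraph V) (x₀ : V) : Prop :=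
  ∀ L : ℝ, 1 ≤ L → ∃ s : ℝ, 0 ≤ s ∧ ∀ C : ℝ, 0 ≤ C →
    ∃ R : ℕ, ∀ x ∈ bigonSet G x₀ L s C, G.dist x₀ x ≤ R

/-- A coarse embedding of the graph `G` into the graph `H`, with multiplicative constant `K`
and compression function `ρ`. -/
def IsCoarseEmbedding {V W : Type*} (G : SimpleGraph V) (H : SimpleGraph W)
    (f : V → W) (K : ℝ) (ρ : ℕ → ℕ) : Prop :=
  1 ≤ K ∧ Filter.Tendsto ρ Filter.atTop Filter.atTop ∧
    ∀ x y : V, (ρ (G.dist x y) : ℝ) ≤ (H.dist (f x) (f y) : ℝ) ∧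
      (H.dist (f x) (f y) : ℝ) ≤ K * (G.dist x y : ℝ)

/-- The Cayley graph of a group with respect to a (symmetric) set `S`. -/
def cayleyGraph (G : Type*) [Group G] (S : Set G) : SimpleGraph G :=
  SimpleGraph.fromRel (fun x y => x⁻¹ * y ∈ S)

/-- The Cayley graph of `G` w.r.t. the basepoint `1` has exponential growth:
`|B_n(1)|^(1/n)` converges to a limit `> 1`. -/
def HasExpGrowth {V : Type*} (G : SimpleGraph V) (x₀ : V) : Prop :=
  ∃ a : ℝ, 1 < a ∧
    Filter.Tendsto (fun n : ℕ => ((gBall G x₀ n).ncard : ℝ) ^ ((n : ℝ)⁻¹))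
      Filter.atTop (nhds a)

/-- `Div_X(n) ≤ M`: for all vertices `a b` with `d(a,b) ≤ n` and every `c ∉ {a, b}`, there is
a path from `a` to `b` of length at most `M` avoiding the ball around `c` of radius
`(1/2)·d(c,{a,b}) − 2`. -/
def DivLE {V : Type*} (G : SimpleGraph V) (n : ℕ) (M : ℝ) : Prop :=
  ∀ a b c : V, G.dist a b ≤ n → c ≠ a → c ≠ b →
    ∃ w : G.Walk a b, (w.length : ℝ) ≤ M ∧
      ∀ u ∈ w.support, ((min (G.dist c a) (G.dist c b) : ℝ)) / 2 - 2 < (G.dist c u : ℝ)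

/-- A group (given as a graph) is one-ended. -/
def OneEnded {V : Type*} (G : SimpleGraph V) : Prop :=
  ∃! e, e ∈ G.end

/-! ### Thin triangles and contracting projections -/

/-- Thin triangles in terms of metric intervals: a point `u` of the interval between `a` and `b`
is `δ`-close to the interval between `b` and `c` or to the one between `c` and `a`. -/
def ThinIntervals {V : Type*} (Y : SimpleGraph V) (δ : ℕ) : Prop :=
  ∀ a b c u : V, Y.dist a u + Y.dist u b = Y.dist a b →
    ∃ v, (Y.dist b v + Y.dist v c = Y.dist b c ∨ Y.dist c v + Y.dist v a = Y.dist c a) ∧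
      Y.dist u v ≤ δ

lemma dist_add_of_mem_support {V : Type*} {Y : SimpleGraph V} {a b v : V}
    (hY : Y.Connected) (γ : Y.Walk a b) (hγ : γ.IsGeodesic) (hv : v ∈ γ.support) :
    Y.dist a v + Y.dist v b = Y.dist a b := by
  classical
  have h1 := dist_le (γ.takeUntil v hv)
  have h2 := dist_le (γ.dropUntil v hv)
  have h3 := congrArg Walk.length (γ.take_spec hv)
  rw [Walk.length_append] at h3
  have h4 : γ.length = Y.dist a b := hγ
  have h5 := hY.dist_triangle (u := a) (v := v) (w := b)
  omega

lemma thinIntervals_of_graphHyperbolic {V : Type*} {Y : SimpleGraph V} {δ : ℝ}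
    (hY : Y.Connected) (h : GraphHyperbolic Y δ) : ThinIntervals Y ⌈δ⌉₊ := by
  intro a b c u hu
  obtain ⟨w₁, h₁⟩ := hY.exists_walk_length_eq_dist a u
  obtain ⟨w₂, h₂⟩ := hY.exists_walk_length_eq_dist u b
  obtain ⟨γ₂, hγ₂⟩ := hY.exists_walk_length_eq_dist b c
  obtain ⟨γ₃, hγ₃⟩ := hY.exists_walk_length_eq_dist c a
  have hγ₁ : (w₁.append w₂).IsGeodesic := by
    change (w₁.append w₂).length = _
    rw [Walk.length_append]
    omega
  obtain ⟨v, hv, hd⟩ := h (w₁.append w₂) γ₂ γ₃ hγ₁ hγ₂ hγ₃ u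
    (by rw [Walk.mem_support_append_iff]; exact Or.inl w₁.end_mem_support)
  refine ⟨v, hv.imp (dist_add_of_mem_support hY γ₂ hγ₂) (dist_add_of_mem_support hY γ₃ hγ₃), ?_⟩
  exact_mod_cast hd.trans (Nat.le_ceil δ)

/-- Nearest-point projection to a geodesic `p` is contracting: if `x` is further than `2R` from
`p`, then a point `y` at distance at most `R` from `x` projects to within `8δ + 2` of the
projection of `x`. Otherwise a point of `p` far from both projections would, by thinness of the
quadrilateral spanned by `x`, `y` and their projections, be close to the side `[x, y]`. -/
lemma projection_contracting {V : Type*} {Y : SimpleGraph V} {δ R m : ℕ}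
    (hY : Y.Connected) (hδ : ThinIntervals Y δ) (hR : 2 * δ ≤ R) (p : ℕ → V)
    (hp : ∀ i j, i ≤ j → j ≤ m → Y.dist (p i) (p j) = j - i) {x y : V} {i j : ℕ}
    (hjm : j ≤ m) (hij : i ≤ j)
    (hx : ∀ l ≤ m, Y.dist x (p i) ≤ Y.dist x (p l))
    (hy : ∀ l ≤ m, Y.dist y (p j) ≤ Y.dist y (p l))
    (hxy : Y.dist x y ≤ R) (hfar : 2 * R < Y.dist x (p i)) :
    j ≤ i + (8 * δ + 2) := by
  by_contra! hcon
  have hqi := hp i (i + 4 * δ + 1) (by omega) (by omega)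
  have hqj := hp (i + 4 * δ + 1) j (by omega) (by omega)
  have hpij := hp i j hij hjm
  have hxq := hx (i + 4 * δ + 1) (by omega)
  have hyq := hy (i + 4 * δ + 1) (by omega)
  set q := p (i + 4 * δ + 1)
  have tri := fun a b c => hY.dist_triangle (u := a) (v := b) (w := c)
  have com := fun a b => Y.dist_comm (u := a) (v := b)
  obtain ⟨v, hv, hqv⟩ := hδ (p i) (p j) x q (by omega)
  rcases hv with hv | hv
  · obtain ⟨v', hv', hvv'⟩ := hδ (p j) x y v hv
    have t0 := tri q v v'
    rcases hv' with hv' | hv'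
    · have t1 := tri x v' q
      have t2 := com v' q
      omega
    · have t1 := tri y v' q
      have t2 := com v' q
      have t3 := tri q v' (p j)
      omega
  · have t1 := tri x v q
    have t2 := com v q
    have t3 := tri q v (p i)
    have t4 := com q (p i)
    omega

/-- A sequence `w` with steps of length at most `R` joining the endpoints of a geodesic `p` comes
within `8R` of all points of `p` except for a set whose size is linear in the number of steps of
`w`, with a factor that does not depend on `R`. The exceptional set contains the points passed
over by the projection of a step starting further than `2R` from `p`. -/
lemma exists_exceptional_finset {V : Type*} {Y : SimpleGraph V} {δ R m k : ℕ}
    (hY : Y.Connected) (hδ : ThinIntervals Y δ) (hR : 2 * δ ≤ R) (p : ℕ → V)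
    (hp : ∀ i j, i ≤ j → j ≤ m → Y.dist (p i) (p j) = j - i) (w : ℕ → V)
    (h0 : w 0 = p 0) (hk : w k = p m) (hw : ∀ i, Y.dist (w i) (w (i + 1)) ≤ R) :
    ∃ bad : Finset ℕ, bad.card ≤ k * (8 * δ + 3) ∧
      ∀ t ≤ m, t ∉ bad → ∃ i, Y.dist (w i) (p t) ≤ 8 * R := by
  classical
  have hproj : ∀ x : V, ∃ i ≤ m, ∀ l ≤ m, Y.dist x (p i) ≤ Y.dist x (p l) := by
    intro x
    obtain ⟨i, hi, h⟩ := Finset.exists_min_image (Finset.range (m + 1))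
      (fun i => Y.dist x (p i)) ⟨0, by simp⟩
    exact ⟨i, by simpa [Nat.lt_succ_iff] using hi, fun l hl => h l (by simp; omega)⟩
  choose τ hτm hτ using hproj
  refine ⟨(Finset.range k).biUnion
    (fun i => Finset.Icc (τ (w i)) (τ (w i) + (8 * δ + 2))), ?_, ?_⟩
  · refine (Finset.card_biUnion_le_card_mul _ _ (8 * δ + 3) ?_).trans (by simp)
    intro i _
    simp only [Nat.card_Icc]
    omega
  · intro t htm ht
    -- the projection of the last point `p m` is `p m` itself
    have hlast : t ≤ τ (w k) := by
      have h1 := hτ (w k) m le_rfl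
      rw [hk, Y.dist_self, Y.dist_comm, hp _ _ (hτm _) le_rfl] at h1
      rw [hk]
      omega
    have hex : ∃ j, t ≤ τ (w j) := ⟨k, hlast⟩
    have hfind := Nat.find_spec hex
    have hle : Nat.find hex ≤ k := Nat.find_min' hex hlast
    rcases hj : Nat.find hex with _ | i
    · have h1 := hτ (w 0) 0 (Nat.zero_le _)
      rw [h0, Y.dist_self, hp _ _ (Nat.zero_le _) (hτm _)] at h1
      rw [hj, h0] at hfind
      have ht0 : t = 0 := by omega
      exact ⟨0, by rw [h0, ht0, Y.dist_self]; omega⟩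
    · have hlt : τ (w i) < t := by
        have := Nat.find_min hex (m := i) (by omega)
        omega
      rw [hj] at hfind
      by_cases hfar : 2 * R < Y.dist (w i) (p (τ (w i)))
      · have := projection_contracting hY hδ hR p hp (hτm (w (i + 1))) (by omega)
          (hτ (w i)) (hτ (w (i + 1))) (hw i) hfar
        refine absurd (Finset.mem_biUnion.2 ⟨i, ?_, ?_⟩) ht
        · simp; omega
        · simp; omega
      · refine ⟨i, ?_⟩
        have tri := fun a b c => hY.dist_triangle (u := a) (v := b) (w := c)
        have c1 := Y.dist_comm (u := w (i + 1)) (v := w i)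
        have c2 := Y.dist_comm (u := p (τ (w i))) (v := w i)
        have e1 := hp _ _ hlt.le htm
        have e2 := hp _ _ (hlt.le.trans hfind) (hτm _)
        have e3 := hτ (w (i + 1)) _ (hτm (w i))
        have t1 := tri (w i) (p (τ (w i))) (p t)
        have t2 := tri (p (τ (w i))) (w i) (p (τ (w (i + 1))))
        have t3 := tri (w i) (w (i + 1)) (p (τ (w (i + 1))))
        have t4 := tri (w (i + 1)) (w i) (p (τ (w i)))
        have hwi := hw i
        omega

/-- Two sequences with coarse steps joining the endpoints of a long geodesic both pass near a
common point of the geodesic that is far from its endpoints, provided that they have few steps. -/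
lemma exists_common_near_point {V : Type*} {Y : SimpleGraph V} {δ R m k E : ℕ}
    (hY : Y.Connected) (hδ : ThinIntervals Y δ) (hR : 2 * δ ≤ R) (a b : V)
    (hab : Y.dist a b = m) (w w' : ℕ → V)
    (h0 : w 0 = a) (hk : w k = b) (hw : ∀ i, Y.dist (w i) (w (i + 1)) ≤ R)
    (h0' : w' 0 = a) (hk' : w' k = b) (hw' : ∀ i, Y.dist (w' i) (w' (i + 1)) ≤ R)
    (hm : 2 * (k * (8 * δ + 3)) + 2 * E < m + 1) :
    ∃ z i j, E ≤ Y.dist a z ∧ E ≤ Y.dist z b ∧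
      Y.dist (w i) z ≤ 8 * R ∧ Y.dist (w' j) z ≤ 8 * R := by
  classical
  obtain ⟨γ, hγ⟩ := hY.exists_walk_length_eq_dist a b
  have hlen : γ.length = m := hγ.trans hab
  have hp : ∀ i j, i ≤ j → j ≤ m → Y.dist (γ.getVert i) (γ.getVert j) = j - i := by
    intro i j hij hjm
    have hstep : ∀ i n, i + n ≤ m → Y.dist (γ.getVert i) (γ.getVert (i + n)) ≤ n := by
      intro i n
      induction n with
      | zero => simp
      | succ n ih =>
        intro h
        have h1 := ih (by omega)
        have h2 := dist_eq_one_iff_adj.2 (γ.adj_getVert_succ (i := i + n) (by omega))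
        have h3 := hY.dist_triangle (u := γ.getVert i) (v := γ.getVert (i + n))
          (w := γ.getVert (i + n + 1))
        rw [← add_assoc]
        omega
    have h1 := hstep 0 i (by omega)
    have h2 := hstep i (j - i) (by omega)
    have h3 := hstep j (m - j) (by omega)
    rw [zero_add, Walk.getVert_zero] at h1
    rw [Nat.add_sub_cancel' hij] at h2
    rw [Nat.add_sub_cancel' hjm, ← hlen, Walk.getVert_length, hlen] at h3
    have h4 := hY.dist_triangle (u := a) (v := γ.getVert i) (w := b)
    have h5 := hY.dist_triangle (u := γ.getVert i) (v := γ.getVert j) (w := b)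
    omega
  have hpm : γ.getVert m = b := by rw [← hlen, Walk.getVert_length]
  obtain ⟨B, hBc, hB⟩ := exists_exceptional_finset hY hδ hR γ.getVert hp w
    (by rw [h0, Walk.getVert_zero]) (by rw [hk, hpm]) hw
  obtain ⟨B', hBc', hB'⟩ := exists_exceptional_finset hY hδ hR γ.getVert hp w'
    (by rw [h0', Walk.getVert_zero]) (by rw [hk', hpm]) hw'
  obtain ⟨t, ht, htn⟩ : ∃ t ∈ Finset.range (m + 1),
      t ∉ (B ∪ B') ∪ (Finset.range E ∪ Finset.Ioc (m - E) m) := by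
    refine Finset.exists_mem_notMem_of_card_lt_card ?_
    have c1 := Finset.card_union_le (B ∪ B') (Finset.range E ∪ Finset.Ioc (m - E) m)
    have c2 := Finset.card_union_le B B'
    have c3 := Finset.card_union_le (Finset.range E) (Finset.Ioc (m - E) m)
    simp only [Finset.card_range, Nat.card_Ioc] at c3 ⊢
    omega
  simp only [Finset.mem_union, Finset.mem_range, Finset.mem_Ioc, not_or, not_and, not_lt,
    not_le] at ht htn
  obtain ⟨⟨hb, hb'⟩, hE, hE'⟩ := htn
  have htm : t ≤ m - E := by
    by_contra! h
    have := hE' h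
    omega
  obtain ⟨i, hi⟩ := hB t (by omega) hb
  obtain ⟨j, hj⟩ := hB' t (by omega) hb'
  refine ⟨γ.getVert t, i, j, ?_, ?_, hi, hj⟩
  · have := hp 0 t (Nat.zero_le _) (by omega)
    rw [Walk.getVert_zero] at this
    omega
  · have := hp t m (by omega) le_rfl
    rw [hpm] at this
    omega

/-! ### Cayley graphs -/

section Cayley

variable {G : Type*} [Group G] {S : Set G}

lemma cayleyGraph_adj_mul (g : G) {x y : G}
    (h : (cayleyGraph G S).Adj x y) : (cayleyGraph G S).Adj (g * x) (g * y) := by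
  simpa [cayleyGraph, mul_assoc] using h

lemma cayleyGraph_mem_of_adj (hS : S⁻¹ = S) {x y : G}
    (h : (cayleyGraph G S).Adj x y) : x⁻¹ * y ∈ S := by
  obtain ⟨-, h | h⟩ := h
  · exact h
  · rw [← hS, Set.mem_inv]
    simpa using h

lemma cayleyGraph_connected (hgen : Subgroup.closure S = ⊤) :
    (cayleyGraph G S).Connected := by
  have key : ∀ g : G, ∀ x, (cayleyGraph G S).Reachable x (x * g) := by
    intro g
    have hg : g ∈ Subgroup.closure S := by rw [hgen]; trivial
    induction hg using Subgroup.closure_induction with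
    | mem s hs =>
      intro x
      by_cases h : x = x * s
      · rw [← h]
      · exact Adj.reachable ⟨h, Or.inl (by simpa using hs)⟩
    | one => intro x; rw [mul_one]
    | mul a b _ _ ha hb =>
      intro x
      rw [← mul_assoc]
      exact (ha x).trans (hb _)
    | inv a _ ha =>
      intro x
      have := ha (x * a⁻¹)
      rw [inv_mul_cancel_right] at this
      exact this.symm
  have : Nonempty G := ⟨1⟩
  refine ⟨fun x y => ?_⟩
  simpa using key (x⁻¹ * y) x

lemma cayleyGraph_dist_mul_le (hgen : Subgroup.closure S = ⊤) (g x y : G) :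
    (cayleyGraph G S).dist (g * x) (g * y) ≤ (cayleyGraph G S).dist x y := by
  obtain ⟨w, hw⟩ := (cayleyGraph_connected hgen).exists_walk_length_eq_dist x y
  let f : cayleyGraph G S →g cayleyGraph G S := ⟨(g * ·), cayleyGraph_adj_mul g⟩
  rw [← hw, ← Walk.length_map f w]
  exact dist_le (w.map f)

lemma cayleyGraph_dist_eq (hgen : Subgroup.closure S = ⊤) (x y : G) :
    (cayleyGraph G S).dist x y = (cayleyGraph G S).dist 1 (x⁻¹ * y) := by
  have h1 := cayleyGraph_dist_mul_le hgen x⁻¹ x y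
  have h2 := cayleyGraph_dist_mul_le hgen x 1 (x⁻¹ * y)
  rw [inv_mul_cancel] at h1
  rw [mul_one, mul_inv_cancel_left] at h2
  exact le_antisymm h2 h1

/-- Balls in a Cayley graph grow at most exponentially. -/
lemma cayleyGraph_gBall_bound (hfin : S.Finite) (hS : S⁻¹ = S) (hgen : Subgroup.closure S = ⊤)
    (r : ℕ) : (gBall (cayleyGraph G S) 1 r).Finite ∧
      (gBall (cayleyGraph G S) 1 r).ncard ≤ (insert 1 S).ncard ^ r := by
  have hc := cayleyGraph_connected hgen
  induction r with
  | zero =>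
    have : gBall (cayleyGraph G S) 1 0 = {1} := by
      ext x
      simp [gBall, hc.dist_eq_zero_iff, eq_comm]
    simp [this]
  | succ r ih =>
    have hsub : gBall (cayleyGraph G S) 1 (r + 1) ⊆
        (fun z : G × G => z.1 * z.2) '' (gBall (cayleyGraph G S) 1 r ×ˢ insert 1 S) := by
      intro x hx
      have hx' : (cayleyGraph G S).dist 1 x ≤ r + 1 := hx
      rcases Nat.lt_or_ge r ((cayleyGraph G S).dist 1 x) with h | h
      · obtain ⟨w, hw⟩ := hc.exists_walk_length_eq_dist 1 x
        have hlen : w.length = r + 1 := by omega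
        have hadj := w.adj_getVert_succ (i := r) (by omega)
        rw [← hlen, Walk.getVert_length] at hadj
        refine ⟨(w.getVert r, (w.getVert r)⁻¹ * x),
          ⟨?_, Or.inr (cayleyGraph_mem_of_adj hS hadj)⟩, by simp⟩
        have h1 := dist_le (w.take r)
        rw [Walk.take_length] at h1
        exact h1.trans (min_le_left _ _)
      · exact ⟨(x, 1), ⟨h, Or.inl rfl⟩, by simp⟩
    have hfin' : (gBall (cayleyGraph G S) 1 r ×ˢ insert 1 S).Finite :=
      ih.1.prod (hfin.insert 1)
    refine ⟨(hfin'.image _).subset hsub, ?_⟩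
    refine (Set.ncard_le_ncard hsub (hfin'.image _)).trans ((Set.ncard_image_le hfin').trans ?_)
    rw [Set.ncard_prod, pow_succ]
    exact Nat.mul_le_mul_right _ ih.2

end Cayley

section Hom

variable {G H : Type*} [Group G] [Group H] {S : Set G} {T : Set H}

lemma exists_lipschitz (hfin : S.Finite) (hS : S⁻¹ = S) (hgen : Subgroup.closure S = ⊤)
    (hgenT : Subgroup.closure T = ⊤) (φ : G →* H) :
    ∃ K : ℕ, 1 ≤ K ∧ ∀ x y : G, (cayleyGraph H T).dist (φ x) (φ y) ≤
      K * (cayleyGraph G S).dist x y := by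
  obtain ⟨K, hK⟩ := (hfin.image (fun s => (cayleyGraph H T).dist 1 (φ s))).bddAbove
  refine ⟨K + 1, by omega, fun x y => ?_⟩
  obtain ⟨w, hw⟩ := (cayleyGraph_connected hgen).exists_walk_length_eq_dist x y
  rw [← hw]
  clear hw
  induction w with
  | nil => simp
  | @cons u v z h w ih =>
    have h1 : (cayleyGraph H T).dist (φ u) (φ v) ≤ K := by
      rw [cayleyGraph_dist_eq hgenT, ← map_inv, ← map_mul]
      exact hK ⟨_, cayleyGraph_mem_of_adj hS h, rfl⟩
    have h2 := (cayleyGraph_connected hgenT).dist_triangle (u := φ u) (v := φ v) (w := φ z)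
    rw [Walk.length_cons, mul_add]
    omega

/-- An injective homomorphism is metrically proper: elements with nearby images are nearby. -/
lemma exists_proper (hgen : Subgroup.closure S = ⊤)
    (hfinT : T.Finite) (hT : T⁻¹ = T) (hgenT : Subgroup.closure T = ⊤) (φ : G →* H)
    (hφ : Function.Injective φ) (r : ℕ) :
    ∃ s : ℕ, ∀ x y : G, (cayleyGraph H T).dist (φ x) (φ y) ≤ r →
      (cayleyGraph G S).dist x y ≤ s := by
  have hfin : (φ ⁻¹' gBall (cayleyGraph H T) 1 r).Finite :=
    (cayleyGraph_gBall_bound hfinT hT hgenT r).1.preimage hφ.injOn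
  obtain ⟨s, hs⟩ := (hfin.image (fun g => (cayleyGraph G S).dist 1 g)).bddAbove
  refine ⟨s, fun x y h => ?_⟩
  rw [cayleyGraph_dist_eq hgenT, ← map_inv, ← map_mul] at h
  rw [cayleyGraph_dist_eq hgen]
  exact hs ⟨_, h, rfl⟩

end Hom

/-! ### Bigons with linearly distorted endpoints -/

/-- Sampling a walk every `N` steps and mapping it by a `K`-Lipschitz map gives a sequence with
steps of length at most `K * N`. -/
lemma dist_sample_le {V W : Type*} {X : SimpleGraph V} {Y : SimpleGraph W} (hX : X.Connected)
    {K : ℕ} {f : V → W} (hf : ∀ x y, Y.dist (f x) (f y) ≤ K * X.dist x y) {a b : V}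
    (α : X.Walk a b) (N i : ℕ) :
    Y.dist (f (α.getVert (i * N))) (f (α.getVert ((i + 1) * N))) ≤ K * N := by
  refine (hf _ _).trans (Nat.mul_le_mul_left _ ?_)
  have hstep : ∀ j n, X.dist (α.getVert j) (α.getVert (j + n)) ≤ n := by
    intro j n
    induction n with
    | zero => simp
    | succ n ih =>
      have h1 : X.dist (α.getVert (j + n)) (α.getVert (j + n + 1)) ≤ 1 := by
        rcases Nat.lt_or_ge (j + n) α.length with h | h
        · exact (dist_eq_one_iff_adj.2 (α.adj_getVert_succ h)).le
        · rw [α.getVert_of_length_le h, α.getVert_of_length_le (h.trans (Nat.le_succ _))]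
          simp
      have h3 := hX.dist_triangle (u := α.getVert j) (v := α.getVert (j + n))
        (w := α.getVert (j + n + 1))
      rw [← add_assoc]
      omega
  rw [Nat.succ_mul]
  exact hstep _ _

/-- The main geometric step. Let `f : X → Y` be Lipschitz with `Y` hyperbolic, and let `α₁`, `α₂`
be walks from `x₀` to `x` that are long by at most a factor `A` compared with the distance `m`
between `f x₀` and `f x`. If `m` is large, there are vertices of `α₁` and `α₂` far from `x₀` and
`x` whose images are at distance at most `16 * K * N`. Here `N` depends only on `δ` and `A`. -/
lemma exists_close_vertices {V W : Type*} {X : SimpleGraph V} {Y : SimpleGraph W}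
    (hX : X.Connected) (hY : Y.Connected) {δ K A C N m : ℕ} (hδ : ThinIntervals Y δ)
    (hK : 1 ≤ K) (hA : 1 ≤ A) (hN : N = 16 * (8 * δ + 3) * A + 2 * δ)
    {f : V → W} (hf : ∀ x y, Y.dist (f x) (f y) ≤ K * X.dist x y) {x₀ x : V}
    (α₁ α₂ : X.Walk x₀ x) (hm : Y.dist (f x₀) (f x) = m)
    (h₁ : α₁.length ≤ A * m) (h₂ : α₂.length ≤ A * m)
    (hlarge : 4 * (8 * δ + 3) + 4 * (K * C + 8 * (K * N) + 1) ≤ m) :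
    ∃ u ∈ α₁.support, ∃ v ∈ α₂.support,
      (C < X.dist x₀ u ∧ C < X.dist x u) ∧ (C < X.dist x₀ v ∧ C < X.dist x v) ∧
      Y.dist (f u) (f v) ≤ 16 * (K * N) := by
  have hNpos : 0 < N := by
    have : 0 < (8 * δ + 3) * A := by positivity
    rw [mul_assoc] at hN
    omega
  set k := A * m / N + 1 with hkdef
  have hkN : A * m ≤ k * N := by
    have := Nat.lt_div_mul_add hNpos (a := A * m)
    rw [hkdef, Nat.succ_mul]
    omega
  -- `16 (8δ + 3) A ≤ N`, so the exceptional sets have total size at most `m / 8 + O(1)`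
  have hcount : 16 * (8 * δ + 3) * (A * m / N) ≤ m := by
    refine le_of_mul_le_mul_left (a := A) ?_ hA
    have h1 : A * m / N * N ≤ A * m := Nat.div_mul_le_self _ _
    have h2 : (A * m / N) * (16 * (8 * δ + 3) * A) ≤ (A * m / N) * N :=
      Nat.mul_le_mul_left _ (by omega)
    calc A * (16 * (8 * δ + 3) * (A * m / N)) = (A * m / N) * (16 * (8 * δ + 3) * A) := by ring
      _ ≤ A * m := h2.trans h1
  have hsmall : 2 * (k * (8 * δ + 3)) + 2 * (K * C + 8 * (K * N) + 1) < m + 1 := by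
    have : k * (8 * δ + 3) = (8 * δ + 3) * (A * m / N) + (8 * δ + 3) := by rw [hkdef]; ring
    rw [this]
    rw [mul_assoc] at hcount
    omega
  have hKN : 2 * δ ≤ K * N := by
    have := Nat.mul_le_mul_right N hK
    omega
  obtain ⟨z, i, j, hz, hz', hi, hj⟩ := exists_common_near_point (R := K * N) (k := k) hY hδ hKN
    (f x₀) (f x) hm (fun i => f (α₁.getVert (i * N))) (fun i => f (α₂.getVert (i * N)))
    (by simp) (by rw [α₁.getVert_of_length_le (h₁.trans hkN)])
    (dist_sample_le hX hf α₁ N)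
    (by simp) (by rw [α₂.getVert_of_length_le (h₂.trans hkN)])
    (dist_sample_le hX hf α₂ N) hsmall
  have far : ∀ u, Y.dist (f u) z ≤ 8 * (K * N) → C < X.dist x₀ u ∧ C < X.dist x u := by
    intro u hu
    have t1 := hY.dist_triangle (u := f x₀) (v := f u) (w := z)
    have t2 := hY.dist_triangle (u := f x) (v := f u) (w := z)
    have t3 := Y.dist_comm (u := f x) (v := z)
    have l1 := hf x₀ u
    have l2 := hf x u
    constructor
    · refine Nat.lt_of_mul_lt_mul_left (a := K) ?_
      omega
    · refine Nat.lt_of_mul_lt_mul_left (a := K) ?_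
      omega
  refine ⟨_, α₁.getVert_mem_support (i * N), _, α₂.getVert_mem_support (j * N),
    far _ hi, far _ hj, ?_⟩
  have t1 := hY.dist_triangle (u := f (α₁.getVert (i * N))) (v := z)
    (w := f (α₂.getVert (j * N)))
  have t2 := Y.dist_comm (u := z) (v := f (α₂.getVert (j * N)))
  omega

/-! ### Subgroups of hyperbolic groups -/

/-- A finitely generated group whose Cayley graph (w.r.t. a finite symmetric
generating set) has exponentially many fat bigons is not isomorphic to any subgroup of a
hyperbolic group, i.e. there is no injective homomorphism from it into any finitely generated
group having a `δ`-hyperbolic Cayley graph w.r.t. some finite symmetric generating set. -/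
theorem not_subgroup_of_hyperbolic_group
    {G : Type*} [Group G] (S : Set G)
    (hSfin : S.Finite) (hSsymm : S⁻¹ = S) (hSgen : Subgroup.closure S = ⊤)
    (hbig : HasExpManyFatBigons (cayleyGraph G S) 1) :
    ∀ (H : Type*) [Group H] (T : Set H),
      T.Finite → T⁻¹ = T → Subgroup.closure T = ⊤ →
      (∃ δ : ℝ, 1 ≤ δ ∧ GraphHyperbolic (cayleyGraph H T) δ) →
      ∀ φ : G →* H, ¬ Function.Injective φ := by
  intro H _ T hTfin hTsymm hTgen ⟨δ', _, hhyp⟩ φ hφ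
  have hX := cayleyGraph_connected hSgen
  have hY := cayleyGraph_connected hTgen
  have hδ := thinIntervals_of_graphHyperbolic hY hhyp
  set δ := ⌈δ'⌉₊
  obtain ⟨K, hK, hf⟩ := exists_lipschitz hSfin hSsymm hSgen hTgen φ
  obtain ⟨s₀, c, L', hs₀, hc, hL', hbig⟩ := hbig
  -- `q` is chosen so that balls of radius `n / q` in `H` have fewer than `c ^ n` elements
  set D := (insert 1 T).ncard
  obtain ⟨q, hq⟩ := pow_unbounded_of_one_lt (D : ℝ) hc
  have hD : 1 ≤ D := (Set.ncard_pos (hTfin.insert 1)).2 ⟨1, Or.inl rfl⟩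
  have hq0 : 0 < q := by
    rcases Nat.eq_zero_or_pos q with h | h
    · rw [h, pow_zero] at hq
      have : (1 : ℝ) ≤ D := by exact_mod_cast hD
      linarith
    · exact h
  set L := ⌈L'⌉₊ with hLdef
  have hL : 1 ≤ L := Nat.one_le_ceil_iff.2 (by linarith)
  set A := L * q with hAdef
  have hA : 1 ≤ A := Nat.mul_pos hL hq0
  obtain ⟨N, hN⟩ : ∃ N, N = 16 * (8 * δ + 3) * A + 2 * δ := ⟨_, rfl⟩
  obtain ⟨s₁, hs₁⟩ := exists_proper hSgen hTfin hTsymm hTgen φ hφ (16 * (K * N))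
  obtain ⟨C', -, hinf⟩ := hbig (max s₀ s₁) (le_max_left _ _)
  set C := ⌈C'⌉₊
  set M := 4 * (8 * δ + 3) + 4 * (K * C + 8 * (K * N) + 1) with hM
  obtain ⟨n, hn, hnM⟩ := hinf.exists_gt (q * M)
  have hn : c ^ n ≤ ((bigonSet (cayleyGraph G S) 1 L' (max s₀ s₁) C' ∩
      gBall (cayleyGraph G S) 1 n).ncard : ℝ) := hn
  have hMr : M ≤ n / q := (Nat.le_div_iff_mul_le hq0).2 (by rw [mul_comm]; exact hnM.le)
  obtain ⟨x, ⟨hxb, hxn⟩, hxfar⟩ : ∃ x ∈ bigonSet (cayleyGraph G S) 1 L' (max s₀ s₁) C' ∩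
      gBall (cayleyGraph G S) 1 n, n / q < (cayleyGraph H T).dist 1 (φ x) := by
    by_contra! hcon
    obtain ⟨hfin, hcard⟩ := cayleyGraph_gBall_bound hTfin hTsymm hTgen (n / q)
    have h1 := (Set.ncard_le_ncard_of_injOn φ hcon hφ.injOn hfin).trans hcard
    have h2 : c ^ n ≤ (D : ℝ) ^ (n / q) := hn.trans (by exact_mod_cast h1)
    have h3 : (D : ℝ) ^ (n / q) < (c ^ q) ^ (n / q) :=
      pow_lt_pow_left₀ hq (Nat.cast_nonneg _) (by omega)
    rw [← pow_mul] at h3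
    have h4 : c ^ (q * (n / q)) ≤ c ^ n := pow_le_pow_right₀ hc.le (Nat.mul_div_le n q)
    linarith
  obtain ⟨α₁, α₂, h₁, h₂, hsep⟩ := hxb
  have hxn : (cayleyGraph G S).dist 1 x ≤ n := hxn
  have hlen : ∀ α : (cayleyGraph G S).Walk 1 x,
      (α.length : ℝ) ≤ L' * (cayleyGraph G S).dist 1 x →
      α.length ≤ A * (cayleyGraph H T).dist 1 (φ x) := by
    intro α hα
    have e1 : (α.length : ℝ) ≤ L * (cayleyGraph G S).dist 1 x :=
      hα.trans (mul_le_mul_of_nonneg_right (Nat.le_ceil L') (Nat.cast_nonneg _))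
    have e2 : α.length ≤ L * (cayleyGraph G S).dist 1 x := by exact_mod_cast e1
    have e3 : n ≤ q * (cayleyGraph H T).dist 1 (φ x) := by
      rw [mul_comm]
      exact ((Nat.div_lt_iff_lt_mul hq0).1 hxfar).le
    rw [hAdef, mul_assoc]
    exact e2.trans (Nat.mul_le_mul_left _ (hxn.trans e3))
  obtain ⟨u, hu, v, hv, ⟨hu1, hu2⟩, ⟨hv1, hv2⟩, huv⟩ :=
    exists_close_vertices (C := C) hX hY hδ hK hA hN hf α₁ α₂ (by rw [map_one])
      (hlen α₁ h₁) (hlen α₂ h₂) (by omega)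
  have big : ∀ d : ℕ, C < d → C' < (d : ℝ) := fun d hd =>
    (Nat.le_ceil C').trans_lt (by exact_mod_cast hd)
  have hs := hsep u hu v hv ⟨big _ hu1, big _ hu2⟩ ⟨big _ hv1, big _ hv2⟩
  have hle : ((cayleyGraph G S).dist u v : ℝ) ≤ s₁ := by exact_mod_cast hs₁ u v huv
  linarith [le_max_right s₀ (s₁ : ℝ)]
end

section
/- Let X be a Cayley graph of an infinite finitely generated group with respect to a finite symmetric generating set, and let s ≥ 0. Then for any geodesic segment [p,q] in X there exists a geodesic ray β starting at p such that every vertex w on β satisfies either d(w,p) ≤ 2s or d(w,[p,q]) > s. -/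
/-!
A vertex-transitive, infinite, locally finite connected graph contains a bi-infinite geodesic
through each vertex `p` (`exists_biinfinite_geodesic`): there are geodesic segments of every even
length, their midpoints can be translated to `p`, and an ultrafilter limit of the resulting
segments exists because balls are finite.

The two halves of such a line are geodesic rays from `p`, and one of them works. Otherwise
there are points at distances `i, j > 2s` from `p` on the two halves which are `s`-close to points
`u, v` of `[p,q]` respectively. Say `d(p,v) ≤ d(p,u)`. As `u` and `v` lie on a geodesic from `p`,
`i + j ≤ 2s + d(u,v) = 2s + d(p,u) - d(p,v) ≤ 2s + (i + s) - (j - s)`, so `j ≤ 2s`, a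
contradiction.
-/

open SimpleGraph

namespace CayleyRay

lemma dist_getVert_of_le {V : Type*} {X : SimpleGraph V} (hX : X.Connected) {x y : V}
    (w : X.Walk x y) (hw : w.IsGeodesic) {a b : ℕ} (hab : a ≤ b) (hb : b ≤ w.length) :
    X.dist (w.getVert a) (w.getVert b) = b - a := by
  have hw' : w.length = X.dist x y := hw
  have h1 : X.dist x (w.getVert a) ≤ a := by
    refine (dist_le (w.take a)).trans ?_
    simp
  have h3 : X.dist (w.getVert b) y ≤ w.length - b := by
    refine (dist_le (w.drop b)).trans ?_
    simp
  have h2 : X.dist (w.getVert a) (w.getVert b) ≤ b - a := by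
    have hv : (w.drop a).getVert (b - a) = w.getVert b := by
      rw [Walk.drop_getVert]; congr 1; omega
    rw [← hv]
    refine (dist_le ((w.drop a).take (b - a))).trans ?_
    simp
  have t1 := hX.dist_triangle (u := x) (v := w.getVert a) (w := y)
  have t2 := hX.dist_triangle (u := w.getVert a) (v := w.getVert b) (w := y)
  omega

lemma dist_getVert {V : Type*} {X : SimpleGraph V} (hX : X.Connected) {x y : V}
    (w : X.Walk x y) (hw : w.IsGeodesic) {a b : ℕ} (ha : a ≤ w.length) (hb : b ≤ w.length) :
    (X.dist (w.getVert a) (w.getVert b) : ℤ) = |(a : ℤ) - b| := by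
  rcases le_total a b with h | h
  · rw [dist_getVert_of_le hX w hw h hb]
    rw [abs_of_nonpos (by omega)]; omega
  · rw [dist_comm, dist_getVert_of_le hX w hw h ha]
    rw [abs_of_nonneg (by omega)]; omega

variable {G : Type*} [Group G] (S : Set G)

/-- Left translation by `a`, as an automorphism of the Cayley graph. -/
def translate (a : G) : cayleyGraph G S ≃g cayleyGraph G S where
  toEquiv := Equiv.mulLeft a
  map_rel_iff' := by
    intro x y
    simp [cayleyGraph, SimpleGraph.fromRel_adj, mul_assoc]

lemma reachable_translate (a : G) {x y : G} (h : (cayleyGraph G S).Reachable x y) :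
    (cayleyGraph G S).Reachable (a * x) (a * y) :=
  h.map (translate S a).toHom

lemma connected (hS : Subgroup.closure S = ⊤) : (cayleyGraph G S).Connected := by
  have key : ∀ x : G, (cayleyGraph G S).Reachable 1 x := by
    intro x
    have hx : x ∈ Subgroup.closure S := by rw [hS]; trivial
    induction hx using Subgroup.closure_induction with
    | mem x hx =>
      by_cases h : 1 = x
      · rw [h]
      · exact Adj.reachable (by simp [cayleyGraph, SimpleGraph.fromRel_adj, h, hx])
    | one => exact Reachable.refl _
    | mul x y _ _ hx hy =>
      have := reachable_translate S x hy
      rw [mul_one] at this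
      exact hx.trans this
    | inv x _ hx =>
      have := reachable_translate S x⁻¹ hx
      rw [mul_one, inv_mul_cancel] at this
      exact this.symm
  exact ⟨fun x y => (key x).symm.trans (key y)⟩

lemma dist_translate (hS : Subgroup.closure S = ⊤) (a x y : G) :
    (cayleyGraph G S).dist (a * x) (a * y) = (cayleyGraph G S).dist x y := by
  have le : ∀ a x y : G,
      (cayleyGraph G S).dist (a * x) (a * y) ≤ (cayleyGraph G S).dist x y := by
    intro a x y
    obtain ⟨w, hw⟩ := (connected S hS).exists_walk_length_eq_dist x y
    rw [← hw, ← Walk.length_map (translate S a).toHom w]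
    exact dist_le _
  refine le_antisymm (le a x y) ?_
  simpa using le a⁻¹ (a * x) (a * y)

lemma finite_ball (hfin : S.Finite) (hS : Subgroup.closure S = ⊤) (p : G) (n : ℕ) :
    {v | (cayleyGraph G S).dist p v ≤ n}.Finite := by
  have hX := connected S hS
  induction n with
  | zero =>
    refine (Set.finite_singleton p).subset fun v hv => ?_
    have : (cayleyGraph G S).dist p v = 0 := Nat.le_zero.mp hv
    exact (hX.dist_eq_zero_iff.mp this).symm
  | succ n ih =>
    refine (ih.union (ih.mul (hfin.union hfin.inv))).subset fun v hv => ?_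
    rcases Nat.lt_or_ge n ((cayleyGraph G S).dist p v) with h | h
    · right
      have hv' : (cayleyGraph G S).dist p v = n + 1 := le_antisymm hv h
      obtain ⟨w, hw⟩ := hX.exists_walk_length_eq_dist p v
      have hadj := w.adj_getVert_succ (i := n) (by omega)
      rw [w.getVert_of_length_le (i := n + 1) (by omega)] at hadj
      refine Set.mem_mul.mpr ⟨w.getVert n, ?_, (w.getVert n)⁻¹ * v, ?_, by simp⟩
      · exact (dist_le (w.take n)).trans (by simp)
      · simp only [cayleyGraph, SimpleGraph.fromRel_adj] at hadj
        rcases hadj.2 with h | h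
        · exact Or.inl h
        · refine Or.inr (Set.mem_inv.mpr ?_)
          rwa [mul_inv_rev, inv_inv]
    · exact Or.inl h

/-- Geodesic segments of every even length centred at `p`, with junk values beyond the ends. -/
lemma exists_centred_segment [Infinite G] (hfin : S.Finite) (hS : Subgroup.closure S = ⊤)
    (p : G) (n : ℕ) :
    ∃ f : ℤ → G, f 0 = p ∧ ∀ i j : ℤ, |i| ≤ n → |j| ≤ n →
      ((cayleyGraph G S).dist (f i) (f j) : ℤ) = |i - j| := by
  have hX := connected S hS
  obtain ⟨x, hx⟩ : ∃ x : G, 2 * n < (cayleyGraph G S).dist 1 x := by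
    by_contra! h
    exact Set.infinite_univ ((finite_ball S hfin hS 1 (2 * n)).subset fun v _ => h v)
  obtain ⟨w, hw⟩ := hX.exists_walk_length_eq_dist 1 x
  refine ⟨fun i => p * (w.getVert n)⁻¹ * w.getVert (n + i).toNat, by simp, ?_⟩
  intro i j hi hj
  rw [abs_le] at hi hj
  rw [dist_translate S hS, dist_getVert hX w hw (by omega) (by omega)]
  congr 1
  omega

/-- The limit of the centred segments along a non-principal ultrafilter is a bi-infinite
geodesic: each coordinate ranges over a finite ball, so it is constant on a large set. -/
lemma exists_biinfinite_geodesic [Infinite G] (hfin : S.Finite) (hS : Subgroup.closure S = ⊤)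
    (p : G) :
    ∃ f : ℤ → G, f 0 = p ∧ ∀ i j : ℤ, ((cayleyGraph G S).dist (f i) (f j) : ℤ) = |i - j| := by
  choose F hF0 hF using exists_centred_segment S hfin hS p
  have large : ∀ i : ℤ, ∀ᶠ n : ℕ in (Filter.hyperfilter ℕ : Filter ℕ), |i| ≤ (n : ℤ) := by
    intro i
    refine Filter.Eventually.filter_mono Nat.hyperfilter_le_atTop ?_
    filter_upwards [Filter.eventually_ge_atTop i.natAbs] with n hn
    rw [Int.abs_eq_natAbs]
    exact_mod_cast hn
  have lim : ∀ i : ℤ, ∃ v : G, ∀ᶠ n : ℕ in (Filter.hyperfilter ℕ : Filter ℕ), F n i = v := by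
    intro i
    have hb : ∀ᶠ n : ℕ in (Filter.hyperfilter ℕ : Filter ℕ),
        ∃ v ∈ {v | (cayleyGraph G S).dist p v ≤ i.natAbs}, F n i = v := by
      filter_upwards [large i] with n hn
      refine ⟨_, ?_, rfl⟩
      have := hF n 0 i (by simp) hn
      rw [hF0] at this
      rw [zero_sub, abs_neg, Int.abs_eq_natAbs] at this
      have hd : (cayleyGraph G S).dist p (F n i) ≤ i.natAbs := by omega
      exact hd
    have hb' : (⋃ v ∈ {v | (cayleyGraph G S).dist p v ≤ i.natAbs}, {n | F n i = v}) ∈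
        Filter.hyperfilter ℕ := by
      filter_upwards [hb] with n hn
      simpa using hn
    obtain ⟨v, -, hv⟩ :=
      (Ultrafilter.finite_biUnion_mem_iff (finite_ball S hfin hS p i.natAbs)).mp hb'
    exact ⟨v, hv⟩
  choose f hf using lim
  refine ⟨f, ?_, fun i j => ?_⟩
  · obtain ⟨n, hn⟩ := (hf 0).exists
    rw [← hn, hF0]
  · obtain ⟨n, hi, hj, hni, hnj⟩ :=
      ((hf i).and ((hf j).and ((large i).and (large j)))).exists
    rw [← hi, ← hj]
    exact hF n i j hni hnj

end CayleyRay

/-- In the Cayley graph of an infinite finitely generated group, for any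
`s ≥ 0` and any geodesic `[p,q]` there is a geodesic ray `β` starting at `p` (an isometric
embedding of `ℕ`) such that each point `w` of `β` satisfies `d(w,p) ≤ 2s` or
`d(w,[p,q]) > s`. -/
theorem exists_ray_avoiding_geodesic
    {G : Type*} [Group G] [Infinite G] (S : Set G)
    (hSfin : S.Finite) (hSsymm : S⁻¹ = S) (hSgen : Subgroup.closure S = ⊤)
    (s : ℝ) (hs : 0 ≤ s) :
    ∀ (p q : G) (g : (cayleyGraph G S).Walk p q), g.IsGeodesic →
      ∃ β : ℕ → G, β 0 = p ∧
        (∀ i j : ℕ, ((cayleyGraph G S).dist (β i) (β j) : ℤ) = |(i : ℤ) - (j : ℤ)|) ∧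
        ∀ k : ℕ, ((cayleyGraph G S).dist (β k) p : ℝ) ≤ 2 * s ∨
          ∀ u ∈ g.support, s < ((cayleyGraph G S).dist (β k) u : ℝ) := by
  intro p q g hg
  have hX := CayleyRay.connected S hSgen
  obtain ⟨f, hf0, hf⟩ := CayleyRay.exists_biinfinite_geodesic S hSfin hSgen p
  have hp : ∀ i : ℤ, ((cayleyGraph G S).dist (f i) p : ℤ) = |i| := fun i => by
    rw [← hf0, hf, sub_zero]
  by_contra! hcon
  obtain ⟨i, hi, u, hu, hiu⟩ := hcon (fun n => f n) (by simpa using hf0) (fun i j => hf i j)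
  obtain ⟨j, hj, v, hv, hjv⟩ := hcon (fun n => f (-n)) (by simpa using hf0) (fun i j => by
    rw [hf, abs_sub_comm]; congr 1; ring)
  have hpi : (cayleyGraph G S).dist (f i) p = i := by have := hp i; simp at this; omega
  have hpj : (cayleyGraph G S).dist (f (-j)) p = j := by have := hp (-j); simp at this; omega
  have hij : (cayleyGraph G S).dist (f i) (f (-j)) = i + j := by
    have := hf i (-j)
    rw [abs_of_nonneg (by omega)] at this
    omega
  obtain ⟨a, hua, ha⟩ := Walk.mem_support_iff_exists_getVert.mp hu
  obtain ⟨b, hvb, hb⟩ := Walk.mem_support_iff_exists_getVert.mp hv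
  have hda : (cayleyGraph G S).dist p u = a := by
    have := CayleyRay.dist_getVert_of_le hX g hg (Nat.zero_le a) ha
    rwa [Walk.getVert_zero, hua] at this
  have hdb : (cayleyGraph G S).dist p v = b := by
    have := CayleyRay.dist_getVert_of_le hX g hg (Nat.zero_le b) hb
    rwa [Walk.getVert_zero, hvb] at this
  have hab : ((cayleyGraph G S).dist u v : ℝ) = |(a : ℝ) - b| := by
    have := CayleyRay.dist_getVert hX g hg ha hb
    rw [hua, hvb] at this
    exact_mod_cast this
  have tri : ∀ x y z : G, ((cayleyGraph G S).dist x z : ℝ) ≤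
      (cayleyGraph G S).dist x y + (cayleyGraph G S).dist y z := fun x y z => by
    exact_mod_cast hX.dist_triangle
  have c := fun x y : G => (cayleyGraph G S).dist_comm (u := x) (v := y)
  have t1 := tri (f i) u (f (-j))
  have t2 := tri u v (f (-j))
  have t3 := tri (f i) u p
  have t4 := tri (f (-j)) v p
  have t5 := tri p (f i) u
  have t6 := tri p (f (-j)) v
  simp only [hpi, hpj] at hi hj
  rw [c v (f (-j))] at t2
  rw [c u p] at t3
  rw [c v p] at t4
  rw [c p (f i)] at t5
  rw [c p (f (-j))] at t6
  simp only [hpi, hpj, hij, hda, hdb, hab, Nat.cast_add] at t1 t2 t3 t4 t5 t6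
  -- The two signs of `a - b` decide which of `i`, `j` is at most `2s`.
  rcases abs_cases ((a : ℝ) - b) with ⟨h, -⟩ | ⟨h, -⟩ <;> linarith
end
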